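/- Let G and Ω be domains in ℂ and let Φ = (φₙ) be an eventually injective sequence of holomorphic maps from G to Ω. Then there exists a (Φ,G,Ω)-universal function if and only if for every G-convex compact set K ⊆ G, every Ω-convex compact set L ⊆ Ω, and every N ∈ ℕ, there exists n ≥ N such that φₙ(K) ∩ L = ∅ and φₙ(K) ∪ L is Ω-convex. -/

import Mathlib

open Set Metric Bornology Filter

/-- A *hole* of `E` is a nonempty bounded connected component of `ℂ \ E`. -/
def IsHole (E C : Set ℂ) : Prop :=
  (∃ z ∈ Eᶜ, C = connectedComponentIn Eᶜ z) ∧ Bornology.IsBounded C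

/-- A compact set `K` contained in an open set `Ω` is `Ω`-*convex* if every hole of `K`
contains a point of `ℂ \ Ω`. -/
def OmegaConvex (Ω K : Set ℂ) : Prop :=
  ∀ C : Set ℂ, IsHole K C → (C ∩ Ωᶜ).Nonempty

/-- The *polynomial hull* of `K`: the union of `K` and all of its holes. -/
def polyHull (K : Set ℂ) : Set ℂ :=
  K ∪ {z | z ∈ Kᶜ ∧ Bornology.IsBounded (connectedComponentIn Kᶜ z)}

/-- A sequence of maps is *eventually injective* on `G`: for every compact `K ⊆ G`, the maps
are eventually injective on a neighbourhood of `K` in `G`. -/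
def EventuallyInjective (G : Set ℂ) (φ : ℕ → ℂ → ℂ) : Prop :=
  ∀ K : Set ℂ, K ⊆ G → IsCompact K →
    ∃ N : ℕ, ∀ n ≥ N, ∃ U : Set ℂ, IsOpen U ∧ K ⊆ U ∧ U ⊆ G ∧ Set.InjOn (φ n) U

/-- `f` is `(Φ, G, Ω)`-*universal*: the family `{f ∘ φ n : n ∈ ℕ}` is dense in `H(G)` for the
topology of locally uniform convergence, i.e. every `g` holomorphic on `G` can be approximated
uniformly on every compact subset of `G` by functions `f ∘ φ n`. -/
def UniversalFor (G : Set ℂ) (φ : ℕ → ℂ → ℂ) (f : ℂ → ℂ) : Prop :=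
  ∀ g : ℂ → ℂ, DifferentiableOn ℂ g G →
    ∀ K : Set ℂ, K ⊆ G → IsCompact K → ∀ ε : ℝ, 0 < ε →
      ∃ n : ℕ, ∀ z ∈ K, ‖f (φ n z) - g z‖ < ε

/-- `E` has no hole (for a domain: simple connectivity). -/
def HasNoHole (E : Set ℂ) : Prop := ¬ ∃ C : Set ℂ, IsHole E C

/-- A *Jordan curve*: the image of the unit circle under an injective continuous map. -/
def IsJordanCurve (C : Set ℂ) : Prop :=
  ∃ γ : ℂ → ℂ, ContinuousOn γ (Metric.sphere 0 1) ∧ Set.InjOn γ (Metric.sphere 0 1) ∧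
    C = γ '' Metric.sphere 0 1

/-- A *Jordan arc*: the image of `[0,1]` under an injective continuous map. -/
def IsJordanArc (C : Set ℂ) : Prop :=
  ∃ γ : ℝ → ℂ, ContinuousOn γ (Set.Icc 0 1) ∧ Set.InjOn γ (Set.Icc 0 1) ∧
    C = γ '' Set.Icc 0 1

/-- A compact set is *regular* if its boundary is a union of Jordan curves. -/
def RegularCompact (K : Set ℂ) : Prop :=
  ∃ 𝒞 : Set (Set ℂ), (∀ C ∈ 𝒞, IsJordanCurve C) ∧ frontier K = ⋃₀ 𝒞

/-- `K` is `Ω`-*connected*: it has no hole if `Ω` is simply connected, and has at least one hole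
if `Ω` is not simply connected. -/
def OmegaConnectedSet (Ω K : Set ℂ) : Prop :=
  (HasNoHole Ω → HasNoHole K) ∧ (¬ HasNoHole Ω → ∃ C : Set ℂ, IsHole K C)

/-- Membership in the family `M(Ω)` of nonempty compact subsets of `Ω` that are regular,
connected, `Ω`-connected and `Ω`-convex. -/
def MemM (Ω K : Set ℂ) : Prop :=
  K.Nonempty ∧ IsCompact K ∧ K ⊆ Ω ∧ RegularCompact K ∧ IsConnected K ∧
    OmegaConnectedSet Ω K ∧ OmegaConvex Ω K

/-- `f` is `(Φ, M)`-*universal*: for every `K ∈ M`, the restrictions of the `f ∘ φ n` to `K`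
are dense in `C(K)`. -/
def MUniversal (M : Set (Set ℂ)) (φ : ℕ → ℂ → ℂ) (f : ℂ → ℂ) : Prop :=
  ∀ K ∈ M, ∀ h : ℂ → ℂ, ContinuousOn h K → ∀ ε : ℝ, 0 < ε →
    ∃ n : ℕ, ∀ z ∈ K, ‖f (φ n z) - h z‖ < ε


noncomputable def dbar (u : ℂ → ℂ) (w : ℂ) : ℂ :=
  (1/2) * (fderiv ℝ u w 1 + Complex.I * fderiv ℝ u w Complex.I)

theorem real_lin_aux (A : ℂ →L[ℝ] ℂ) (e : ℂ) (he : e * (starRingEnd ℂ) e = 1) :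
    (1/2) * (A 1 + Complex.I * A Complex.I) = e * ((1/2) * (A e + Complex.I * A (Complex.I * e))) := by
  have h : ∀ z : ℂ, A z = z.re * A 1 + z.im * A Complex.I := by
    intro z
    conv_lhs => rw [show z = z.re • (1:ℂ) + z.im • Complex.I by
      simp [Complex.re_add_im]]
    rw [map_add, map_smul, map_smul]; simp
  rw [h e, h (Complex.I * e)]
  have h1 : (e.re : ℂ) = (e + (starRingEnd ℂ) e) / 2 := by
    rw [Complex.add_conj]; push_cast; ring
  have h2 : (e.im : ℂ) * Complex.I = (e - (starRingEnd ℂ) e) / 2 := by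
    rw [Complex.sub_conj]; push_cast; ring
  have h2' : (e.im : ℂ) = -Complex.I * ((e - (starRingEnd ℂ) e) / 2) := by
    rw [← h2]; linear_combination (e.im:ℂ) * Complex.I_sq
  simp only [Complex.mul_re, Complex.I_re, Complex.mul_im, Complex.I_im]
  push_cast
  simp only [zero_mul, one_mul, zero_sub, zero_add]
  rw [h2', h1]
  have := Complex.I_sq
  linear_combination (-(1/2)) * (A 1 + Complex.I * A Complex.I) * he + (A 1 * e * ((starRingEnd ℂ) e - e) / 4) * this


open MeasureTheory in
theorem cauchy_pompeiu (u : ℂ → ℂ) (hu : ContDiff ℝ 1 u) (hc : HasCompactSupport u) (z : ℂ) :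
    ∫ w, dbar u w * (w - z)⁻¹ = - Real.pi * u z := by
  have h0 : ∫ w, dbar u w * (w - z)⁻¹ = ∫ w, dbar u (w + z) * w⁻¹ := by
    have := integral_add_right_eq_self (μ := volume) (fun w => dbar u w * (w - z)⁻¹) z
    refine this.symm.trans ?_
    congr 1
    ext w
    rw [add_sub_cancel_right]
  rw [h0, ← Complex.integral_comp_polarCoord_symm]
  set e : ℝ → ℂ := fun θ => Real.cos θ + Real.sin θ * Complex.I with he
  have hee : ∀ θ, e θ * (starRingEnd ℂ) (e θ) = 1 := by
    intro θ
    simp only [he, map_add, map_mul, Complex.conj_ofReal, Complex.conj_I]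
    have := Real.sin_sq_add_cos_sq θ
    have h' : (Real.sin θ : ℂ)^2 + (Real.cos θ : ℂ)^2 = 1 := by exact_mod_cast this
    linear_combination h' - (Real.sin θ : ℂ)^2 * Complex.I_sq
  have hecont : Continuous e := by fun_prop
  have hed : ∀ θ, HasDerivAt e (Complex.I * e θ) θ := by
    intro θ
    have h1 := (Real.hasDerivAt_cos θ).ofReal_comp
    have h2 := ((Real.hasDerivAt_sin θ).ofReal_comp).mul_const Complex.I
    have h3 : Complex.I * e θ = ((-Real.sin θ : ℝ) : ℂ) + (Real.cos θ : ℝ) * Complex.I := by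
      simp only [he]
      push_cast
      linear_combination (Complex.sin θ) * Complex.I_sq
    rw [h3]
    exact h1.add h2
  have hen : ∀ θ, ‖e θ‖ = 1 := by
    intro θ
    have := congrArg norm (hee θ)
    simp only [norm_mul, RCLike.norm_conj, norm_one] at this
    nlinarith [norm_nonneg (e θ)]
  have hfd : Continuous (fderiv ℝ u) := hu.continuous_fderiv (by norm_num)
  have hud : Differentiable ℝ u := hu.differentiable (by norm_num)
  set F1 : ℝ × ℝ → ℂ := fun p => fderiv ℝ u (p.1 * e p.2 + z) (e p.2) with hF1
  set F2 : ℝ × ℝ → ℂ := fun p => fderiv ℝ u (p.1 * e p.2 + z) (Complex.I * e p.2) with hF2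
  have c1 : Continuous F1 := by
    apply Continuous.clm_apply
    · exact hfd.comp (by fun_prop)
    · fun_prop
  have c2 : Continuous F2 := by
    apply Continuous.clm_apply
    · exact hfd.comp (by fun_prop)
    · fun_prop
  obtain ⟨R, hR0, hR⟩ : ∃ R : ℝ, 0 < R ∧ ∀ r : ℝ, R < r → ∀ θ, (r * e θ + z) ∉ tsupport u := by
    obtain ⟨R, hR⟩ := hc.isCompact.isBounded.subset_closedBall z
    refine ⟨max R 1, by positivity, fun r hr θ hm => ?_⟩
    have := hR hm
    simp only [mem_closedBall, dist_eq_norm, add_sub_cancel_right, norm_mul, hen, mul_one,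
      Complex.norm_real, Real.norm_eq_abs] at this
    have := le_abs_self r
    have := le_max_left R 1
    linarith
  have hz : ∀ r : ℝ, R < r → ∀ θ, fderiv ℝ u (r * e θ + z) = 0 := by
    intro r hr θ
    by_contra hne
    exact hR r hr θ (support_fderiv_subset ℝ hne)
  have hint : ∀ F : ℝ × ℝ → ℂ, Continuous F → (∀ p : ℝ × ℝ, R < p.1 → F p = 0) →
      IntegrableOn F (Ioi 0 ×ˢ Ioo (-Real.pi) Real.pi) := by
    intro F hF hF0
    have : IntegrableOn F (Icc 0 R ×ˢ Icc (-Real.pi) Real.pi) :=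
      hF.continuousOn.integrableOn_compact (isCompact_Icc.prod isCompact_Icc)
    refine this.of_forall_sdiff_eq_zero (measurableSet_Ioi.prod measurableSet_Ioo) ?_
    rintro ⟨r, θ⟩ ⟨⟨h1, h2⟩, h3⟩
    apply hF0
    by_contra hle
    exact h3 ⟨⟨le_of_lt h1, not_lt.mp hle⟩, Ioo_subset_Icc_self h2⟩
  have i1 := hint F1 c1 (fun p hp => by simp [hF1, hz p.1 hp])
  have i2 := hint F2 c2 (fun p hp => by simp [hF2, hz p.1 hp])
  have hcong : ∫ p in polarCoord.target, p.1 •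
      (dbar u (Complex.polarCoord.symm p + z) * (Complex.polarCoord.symm p)⁻¹) =
      ∫ p in Ioi (0:ℝ) ×ˢ Ioo (-Real.pi) Real.pi, ((1/2) * F1 p + (Complex.I / 2) * F2 p) := by
    rw [polarCoord_target]
    apply setIntegral_congr_fun (measurableSet_Ioi.prod measurableSet_Ioo)
    rintro ⟨r, θ⟩ ⟨h1, h2⟩
    have hr : (r : ℂ) ≠ 0 := by exact_mod_cast (ne_of_gt h1)
    have hne : e θ ≠ 0 := by intro h; have := hen θ; rw [h] at this; simp at this
    simp only [Complex.polarCoord_symm_apply, dbar]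
    have : (r : ℂ) * (Real.cos θ + Real.sin θ * Complex.I) = r * e θ := rfl
    rw [this, real_lin_aux _ _ (hee θ)]
    simp only [hF1, hF2, Complex.real_smul]
    field_simp
  rw [hcong]
  rw [integral_add (i1.const_mul _) (i2.const_mul _), integral_const_mul, integral_const_mul]
  have e1 : ∫ p in Ioi (0:ℝ) ×ˢ Ioo (-Real.pi) Real.pi, F1 p = -(2 * Real.pi) * u z := by
    have i1' := i1
    rw [IntegrableOn, Measure.volume_eq_prod, ← Measure.prod_restrict] at i1'
    rw [Measure.volume_eq_prod, ← Measure.prod_restrict, integral_prod_symm _ i1']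
    have : ∀ θ : ℝ, ∫ r in Ioi (0:ℝ), F1 (r, θ) = - u z := by
      intro θ
      have hd : ∀ r ∈ Ici (0:ℝ), HasDerivAt (fun r : ℝ => u (r * e θ + z)) (F1 (r, θ)) r := by
        intro r _
        have h1 : HasDerivAt (fun r : ℝ => (r : ℂ) * e θ + z) (e θ) r := by
          have := ((hasDerivAt_id r).ofReal_comp.mul_const (e θ)).add_const z
          simpa using this
        exact (hud _).hasFDerivAt.comp_hasDerivAt r h1
      have hii : IntegrableOn (fun r => F1 (r, θ)) (Ioi 0) := by
        have : IntegrableOn (fun r => F1 (r, θ)) (Icc 0 R) :=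
          (c1.comp (by fun_prop : Continuous fun r : ℝ => (r, θ))).continuousOn.integrableOn_compact
            isCompact_Icc
        refine this.of_forall_sdiff_eq_zero measurableSet_Ioi ?_
        rintro r ⟨h1, h3⟩
        have : R < r := by
          by_contra hle
          exact h3 ⟨le_of_lt h1, not_lt.mp hle⟩
        simp [hF1, hz r this]
      have ht : Tendsto (fun r : ℝ => u (r * e θ + z)) atTop (nhds 0) := by
        refine tendsto_const_nhds.congr' ?_
        filter_upwards [eventually_gt_atTop R] with r hr
        exact (image_eq_zero_of_notMem_tsupport (hR r hr θ)).symm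
      rw [integral_Ioi_of_hasDerivAt_of_tendsto' hd hii ht]
      simp
    simp only [this]
    rw [setIntegral_const]
    rw [Real.volume_real_Ioo_of_le (by linarith [Real.pi_pos]), Complex.real_smul]
    push_cast
    ring
  have e2 : ∫ p in Ioi (0:ℝ) ×ˢ Ioo (-Real.pi) Real.pi, F2 p = 0 := by
    have i1' := i2
    rw [IntegrableOn, Measure.volume_eq_prod, ← Measure.prod_restrict] at i1'
    rw [Measure.volume_eq_prod, ← Measure.prod_restrict, integral_prod _ i1']
    have : ∀ r ∈ Ioi (0:ℝ), ∫ θ in Ioo (-Real.pi) Real.pi, F2 (r, θ) = 0 := by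
      intro r hr
      have hr0 : (r:ℂ) ≠ 0 := by exact_mod_cast (ne_of_gt hr)
      rw [← integral_Ioc_eq_integral_Ioo, ← intervalIntegral.integral_of_le (by linarith [Real.pi_pos])]
      have hd : ∀ θ ∈ uIcc (-Real.pi) Real.pi,
          HasDerivAt (fun θ : ℝ => (r:ℂ)⁻¹ * u (r * e θ + z)) (F2 (r, θ)) θ := by
        intro θ _
        have h1 : HasDerivAt (fun θ : ℝ => (r : ℂ) * e θ + z) (r * (Complex.I * e θ)) θ :=
          ((hed θ).const_mul (r:ℂ)).add_const z
        have h2 := ((hud _).hasFDerivAt.comp_hasDerivAt θ h1).const_mul (r:ℂ)⁻¹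
        have h3 : F2 (r, θ) = (r:ℂ)⁻¹ * (fderiv ℝ u (↑r * e θ + z)) (↑r * (Complex.I * e θ)) := by
          rw [← Complex.real_smul (z := Complex.I * e θ), map_smul, Complex.real_smul, ← mul_assoc, inv_mul_cancel₀ hr0, one_mul]
        rw [h3]
        exact h2
      rw [intervalIntegral.integral_eq_sub_of_hasDerivAt hd]
      · simp [he]
      · exact (c2.comp (by fun_prop : Continuous fun θ : ℝ => (r, θ))).intervalIntegrable _ _
    rw [setIntegral_congr_fun measurableSet_Ioi this]
    simp
  rw [e1, e2]
  ring


theorem exists_dbar_rep (K U : Set ℂ) (hK : IsCompact K) (hU : IsOpen U) (hKU : K ⊆ U)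
    (h : ℂ → ℂ) (hh : DifferentiableOn ℂ h U) :
    ∃ v : ℂ → ℂ, Continuous v ∧ HasCompactSupport v ∧ Disjoint (tsupport v) K ∧
      ∀ z ∈ K, ∫ w, v w * (w - z)⁻¹ = h z := by
  obtain ⟨K1, hK1, hKK1, hK1U⟩ := exists_compact_between hK hU hKU
  obtain ⟨χ, hχ1, hχ0, -⟩ := exists_contMDiffMap_one_nhds_of_subset_interior (n := 1)
    (modelWithCornersSelf ℝ ℂ) hK.isClosed hKK1
  have hχd : ContDiff ℝ 1 χ := χ.contMDiff.contDiff
  have hχs : tsupport χ ⊆ K1 := by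
    apply closure_minimal _ hK1.isClosed
    intro x hx
    by_contra hx'
    exact hx (hχ0 x hx')
  set u : ℂ → ℂ := fun w => (χ w : ℂ) * h w with hu
  have huc : HasCompactSupport u := by
    apply HasCompactSupport.intro hK1
    intro x hx
    simp [hu, hχ0 x hx]
  have hud : ContDiff ℝ 1 u := by
    rw [contDiff_iff_contDiffAt]
    intro w
    by_cases hw : w ∈ U
    · apply ContDiffAt.mul
      · exact Complex.ofRealCLM.contDiff.contDiffAt.comp w hχd.contDiffAt
      · have : ContDiffAt ℂ 1 h w :=
          ((hh.contDiffOn hU).contDiffAt (hU.mem_nhds hw))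
        exact this.restrict_scalars ℝ
    · have : w ∈ (tsupport χ)ᶜ := fun h' => hw (hK1U (hχs h'))
      have h2 : (fun _ => (0:ℂ)) =ᶠ[nhds w] u := by
        filter_upwards [(isClosed_tsupport χ).isOpen_compl.mem_nhds this] with y hy
        simp [hu, image_eq_zero_of_notMem_tsupport hy]
      exact contDiffAt_const.congr_of_eventuallyEq h2.symm
  have hdc : Continuous (dbar u) := by
    have hfd : Continuous (fderiv ℝ u) := hud.continuous_fderiv (by norm_num)
    unfold dbar
    fun_prop
  have hds : HasCompactSupport (dbar u) := by
    apply HasCompactSupport.intro huc.isCompact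
    intro x hx
    have : fderiv ℝ u x = 0 := by
      by_contra hne
      exact hx (support_fderiv_subset ℝ hne)
    simp [dbar, this]
  have hdK : ∀ z ∈ K, ∀ᶠ w in nhds z, dbar u w = 0 := by
    intro z hz
    have h1 : ∀ᶠ w in nhds z, χ w = 1 := hχ1.filter_mono (nhds_le_nhdsSet hz)
    filter_upwards [h1.eventually_nhds, hU.mem_nhds (hKU hz)] with w hw hwU
    have h2 : u =ᶠ[nhds w] h := by
      filter_upwards [hw] with y hy
      simp [hu, hy]
    have h3 : DifferentiableAt ℂ h w := hh.differentiableAt (hU.mem_nhds hwU)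
    unfold dbar
    rw [h2.fderiv_eq, h3.fderiv_restrictScalars ℝ]
    simp only [ContinuousLinearMap.coe_restrictScalars']
    have : (fderiv ℂ h w) Complex.I = Complex.I * (fderiv ℂ h w) 1 := by
      rw [← smul_eq_mul, ← map_smul]; simp
    rw [this]
    linear_combination (1/2) * (fderiv ℂ h w) 1 * Complex.I_sq
  refine ⟨fun w => -(Real.pi:ℂ)⁻¹ * dbar u w, by fun_prop, hds.mul_left, ?_, ?_⟩
  · rw [Set.disjoint_right]
    intro z hz hz'
    refine notMem_tsupport_iff_eventuallyEq.mpr ?_ hz'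
    filter_upwards [hdK z hz] with w hw
    simp [hw]
  · intro z hz
    simp only [mul_assoc]
    rw [MeasureTheory.integral_const_mul, cauchy_pompeiu u hud huc z]
    have h1 : χ z = 1 := hχ1.self_of_nhdsSet z hz
    have : (Real.pi : ℂ) ≠ 0 := by exact_mod_cast Real.pi_ne_zero
    simp only [hu, h1]
    field_simp
    simp

/-- restrictions to `K` of functions holomorphic on `Ω`. -/
def holAlg (Ω K : Set ℂ) : Subalgebra ℂ C(K, ℂ) where
  carrier := {g | ∃ F : ℂ → ℂ, DifferentiableOn ℂ F Ω ∧ ∀ z : K, g z = F z}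
  mul_mem' := by
    rintro a b ⟨F, hF, hF'⟩ ⟨E, hE, hE'⟩
    exact ⟨fun z => F z * E z, hF.mul hE, fun z => by simp [hF', hE']⟩
  add_mem' := by
    rintro a b ⟨F, hF, hF'⟩ ⟨E, hE, hE'⟩
    exact ⟨fun z => F z + E z, hF.add hE, fun z => by simp [hF', hE']⟩
  algebraMap_mem' := fun r => ⟨fun _ => r, differentiableOn_const r, fun z => by simp⟩

theorem runge (Ω K U : Set ℂ) (hΩ : IsOpen Ω) (hK : IsCompact K) (hKΩ : K ⊆ Ω)
    (hconv : OmegaConvex Ω K) (hU : IsOpen U) (hKU : K ⊆ U)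
    (h : ℂ → ℂ) (hh : DifferentiableOn ℂ h U) (ε : ℝ) (hε : 0 < ε) :
    ∃ F : ℂ → ℂ, DifferentiableOn ℂ F Ω ∧ ∀ z ∈ K, ‖F z - h z‖ < ε := by
  rcases K.eq_empty_or_nonempty with rfl | hne
  · exact ⟨fun _ => 0, differentiableOn_const 0, fun z hz => absurd hz (by simp)⟩
  have : CompactSpace K := isCompact_iff_compactSpace.mp hK
  have : Nonempty K := hne.to_subtype
  obtain ⟨v, hvc, hvs, hvK, hv⟩ := exists_dbar_rep K U hK hU hKU h hh
  set S := (holAlg Ω K).topologicalClosure with hS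
  have hScl : IsClosed (S : Set C(K, ℂ)) := Subalgebra.isClosed_topologicalClosure _
  let a : C(K, ℂ) := ⟨Subtype.val, continuous_subtype_val⟩
  have ha0 : a ∈ holAlg Ω K := ⟨id, differentiableOn_id, fun z => rfl⟩
  have ha : a ∈ S := Subalgebra.le_topologicalClosure _ ha0
  have hspec : spectrum ℂ a = K := by
    rw [ContinuousMap.spectrum_eq_range]
    exact Subtype.range_coe
  have hunit : ∀ w ∉ K, IsUnit (algebraMap ℂ C(K, ℂ) w - a) := by
    intro w hw
    rw [← hspec] at hw
    exact spectrum.notMem_iff.mp hw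
  -- resolvents
  have hres : ∀ w ∉ K, w ∉ spectrum ℂ (⟨a, ha⟩ : S) := by
    intro w hw hwS
    have hb := Subalgebra.spectrum_isBounded_connectedComponentIn S (⟨a, ha⟩ : S) hwS
    have hsub := Subalgebra.spectrum_sUnion_connectedComponentIn (𝕜 := ℂ) S (⟨a, ha⟩ : S)
    change IsBounded (connectedComponentIn (spectrum ℂ a)ᶜ w) at hb
    change _ = spectrum ℂ a ∪ (⋃ z ∈ _ \ spectrum ℂ a, connectedComponentIn (spectrum ℂ a)ᶜ z) at hsub
    rw [hspec] at hb hsub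
    obtain ⟨p, hp, hpΩ⟩ := hconv _ ⟨⟨w, hw, rfl⟩, hb⟩
    have hpS : p ∈ spectrum ℂ (⟨a, ha⟩ : S) := by
      rw [hsub]
      right
      simp only [mem_iUnion]
      exact ⟨w, ⟨hwS, hw⟩, hp⟩
    apply hpS
    rw [spectrum.mem_resolventSet_iff]
    have hpK : p ∉ K := fun h' => hpΩ (hKΩ h')
    have hne : ∀ z ∈ Ω, p - z ≠ 0 := fun z hz h0 => hpΩ (by rwa [sub_eq_zero.mp h0])
    let b : C(K, ℂ) := ⟨fun z => (p - z)⁻¹, by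
      apply Continuous.inv₀ (by fun_prop)
      exact fun z => hne z (hKΩ z.2)⟩
    have hb : b ∈ S := Subalgebra.le_topologicalClosure _
      ⟨fun z => (p - z)⁻¹, by
        apply DifferentiableOn.inv (by fun_prop) hne, fun z => rfl⟩
    refine IsUnit.of_mul_eq_one (⟨b, hb⟩ : S) ?_
    ext z
    exact mul_inv_cancel₀ (hne z (hKΩ z.2))
  have hinvS : ∀ w ∉ K, Ring.inverse (algebraMap ℂ C(K, ℂ) w - a) ∈ S := by
    intro w hw
    obtain ⟨x, hx⟩ := spectrum.notMem_iff.mp (hres w hw)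
    have h1 : (algebraMap ℂ C(K, ℂ) w - a) * ((x⁻¹ : Sˣ) : S) = 1 := by
      have := congrArg (Subtype.val : S → C(K, ℂ)) x.mul_inv
      rw [hx] at this
      exact this
    have h2 : Ring.inverse (algebraMap ℂ C(K, ℂ) w - a) = (((x⁻¹ : Sˣ) : S) : C(K, ℂ)) := by
      have h3 := Ring.inverse_mul_cancel _ (hunit w hw)
      calc _ = Ring.inverse (algebraMap ℂ C(K, ℂ) w - a) *
            ((algebraMap ℂ C(K, ℂ) w - a) * ((x⁻¹ : Sˣ) : S)) := by rw [h1, mul_one]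
        _ = _ := by rw [← mul_assoc, h3, one_mul]
    rw [h2]
    exact Subtype.property _
  let R : ℂ → C(K, ℂ) := fun w => v w • Ring.inverse (algebraMap ℂ C(K, ℂ) w - a)
  have hRapp : ∀ (z : K) w, R w z = v w * (w - z)⁻¹ := by
    intro z w
    by_cases hw : w ∈ K
    · have : v w = 0 := image_eq_zero_of_notMem_tsupport (Set.disjoint_right.mp hvK hw)
      simp [R, this]
    · have h1 := Ring.mul_inverse_cancel _ (hunit w hw)
      have h2 := congrArg (fun f : C(K, ℂ) => f z) h1
      simp only [ContinuousMap.mul_apply] at h2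
      have h3 : (algebraMap ℂ C(K, ℂ) w - a) z = w - z := rfl
      rw [h3] at h2
      have h4 := eq_inv_of_mul_eq_one_right h2
      simp [R, h4]
  have hRc : Continuous R := by
    rw [continuous_iff_continuousAt]
    intro w
    by_cases hw : w ∈ K
    · have : w ∈ (tsupport v)ᶜ := Set.disjoint_right.mp hvK hw
      have h2 : (fun _ => (0:C(K,ℂ))) =ᶠ[nhds w] R := by
        filter_upwards [(isClosed_tsupport v).isOpen_compl.mem_nhds this] with y hy
        simp [R, image_eq_zero_of_notMem_tsupport hy]
      exact continuousAt_const.congr h2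
    · obtain ⟨x, hx⟩ := hunit w hw
      apply hvc.continuousAt.smul
      have h1 : ContinuousAt Ring.inverse (algebraMap ℂ C(K, ℂ) w - a) := by
        rw [← hx]; exact NormedRing.inverse_continuousAt x
      have h2 : ContinuousAt (fun w => algebraMap ℂ C(K, ℂ) w - a) w := by
        have := (continuous_algebraMap ℂ C(K, ℂ)).sub (continuous_const (y := a))
        exact this.continuousAt
      exact ContinuousAt.comp (f := fun w => algebraMap ℂ C(K, ℂ) w - a) h1 h2
  have hRs : HasCompactSupport R := hvs.smul_right
  have hRi : MeasureTheory.Integrable R := hRc.integrable_of_hasCompactSupport hRs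
  have hRS : ∀ w, R w ∈ S := by
    intro w
    by_cases hw : w ∈ K
    · have : v w = 0 := image_eq_zero_of_notMem_tsupport (Set.disjoint_right.mp hvK hw)
      simp [R, this, zero_mem]
    · exact S.smul_mem (hinvS w hw) _
  have hmem : (∫ w, R w) ∈ S := by
    have : CompleteSpace S := hScl.completeSpace_coe
    let M : Submodule ℂ C(K, ℂ) := Subalgebra.toSubmodule S
    have : CompleteSpace M := hScl.completeSpace_coe
    let R' : ℂ → M := fun w => ⟨R w, hRS w⟩
    have hc' : Continuous R' := hRc.subtype_mk _
    have hs' : HasCompactSupport R' := by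
      apply HasCompactSupport.intro hRs.isCompact
      intro x hx
      exact Subtype.ext (image_eq_zero_of_notMem_tsupport (f := R) hx)
    have hi' : MeasureTheory.Integrable R' := hc'.integrable_of_hasCompactSupport hs'
    have := M.subtypeL.integral_comp_comm hi'
    change ∫ w, R w = _ at this
    rw [this]
    exact (∫ w, R' w).2
  have hval : ∀ z : K, (∫ w, R w) z = h z := by
    intro z
    have := (ContinuousMap.evalCLM ℂ z).integral_comp_comm hRi
    rw [← hv z z.2]
    simp only [← hRapp]
    exact this.symm
  rw [← SetLike.mem_coe, hS, Subalgebra.topologicalClosure_coe, Metric.mem_closure_iff] at hmem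
  obtain ⟨b, ⟨F, hF, hbF⟩, hb⟩ := hmem ε hε
  refine ⟨F, hF, fun z hz => ?_⟩
  have := (ContinuousMap.dist_lt_iff hε).mp hb ⟨z, hz⟩
  rw [hval, hbF, dist_comm, dist_eq_norm] at this
  exact this


theorem pre_frontier {T V : Set ℂ} (hT : IsPreconnected T) (h1 : (T ∩ V).Nonempty)
    (h2 : Disjoint T (frontier V)) : T ⊆ interior V := by
  have key : ∀ x ∈ T, x ∈ interior V ∨ x ∈ (closure V)ᶜ := by
    intro x hx
    by_contra hcon
    push Not at hcon
    exact Set.disjoint_left.mp h2 hx ⟨not_not.mp hcon.2, hcon.1⟩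
  apply hT.subset_left_of_subset_union isOpen_interior isClosed_closure.isOpen_compl
  · exact disjoint_compl_right.mono_left (interior_subset.trans subset_closure)
  · exact key
  · obtain ⟨x, hx, hxV⟩ := h1
    rcases key x hx with h | h
    · exact ⟨x, hx, h⟩
    · exact absurd (subset_closure hxV) h

theorem frontier_comp {W : Set ℂ} (hW : IsOpen W) (z : ℂ) :
    frontier (connectedComponentIn W z) ⊆ Wᶜ := by
  intro x hx hxW
  rw [hW.connectedComponentIn.frontier_eq] at hx
  obtain ⟨hx1, hx2⟩ := hx
  obtain ⟨y, hy1, hy2⟩ := mem_closure_iff.mp hx1 _ (hW.connectedComponentIn (x := x))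
    (mem_connectedComponentIn hxW)
  apply hx2
  rw [connectedComponentIn_eq hy2, ← connectedComponentIn_eq hy1]
  exact mem_connectedComponentIn hxW

theorem hole_of_frontier {K V : Set ℂ} (hV : IsPreconnected V) (hVo : IsOpen V)
    (hVK : Disjoint V K) (hf : frontier V ⊆ K) {z : ℂ} (hz : z ∈ V) :
    connectedComponentIn Kᶜ z = V := by
  apply Subset.antisymm
  · refine (pre_frontier isPreconnected_connectedComponentIn ⟨z, ?_, hz⟩ ?_).trans interior_subset
    · exact mem_connectedComponentIn (Set.disjoint_left.mp hVK hz)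
    · rw [Set.disjoint_left]
      intro x hx hx'
      exact connectedComponentIn_subset _ _ hx (hf hx')
  · exact hV.subset_connectedComponentIn hz (Set.subset_compl_iff_disjoint_right.mpr hVK)

theorem max_princ {Ω C : Set ℂ} (hb : IsBounded C) (hC : C ⊆ Ω) (hf : frontier C ⊆ Ω)
    {F : ℂ → ℂ} (hF : DifferentiableOn ℂ F Ω) {M : ℝ} (hM : ∀ z ∈ frontier C, ‖F z‖ ≤ M) {z : ℂ}
    (hz : z ∈ C) : ‖F z‖ ≤ M := by
  refine Complex.norm_le_of_forall_mem_frontier_norm_le hb ?_ hM (subset_closure hz)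
  apply DifferentiableOn.diffContOnCl
  apply hF.mono
  rw [closure_eq_self_union_frontier]
  exact union_subset hC hf

theorem inj_nhds_le {U : Set ℂ} (hU : IsOpen U) {ψ : ℂ → ℂ} (hψ : DifferentiableOn ℂ ψ U)
    (hinj : InjOn ψ U) {z : ℂ} (hz : z ∈ U) : nhds (ψ z) ≤ map ψ (nhds z) := by
  have ha : AnalyticAt ℂ ψ z := hψ.analyticAt (hU.mem_nhds hz)
  refine ha.eventually_constant_or_nhds_le_map_nhds.resolve_left ?_
  intro hcon
  have h1 : ∀ᶠ w in nhds z, w = z := by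
    filter_upwards [hcon, hU.mem_nhds hz] with w hw hwU
    exact hinj hwU hz hw
  have h2 : ∀ᶠ w in nhdsWithin z {z}ᶜ, False := by
    filter_upwards [h1.filter_mono nhdsWithin_le_nhds, self_mem_nhdsWithin] with w hw hw'
    exact hw' hw
  exact (NeBot.ne inferInstance) (Filter.eventually_false_iff_eq_bot.mp h2)

theorem nec_core (G Ω K K1 K2 L U : Set ℂ) (ψ F : ℂ → ℂ) (B : ℝ)
    (hΩ : IsOpen Ω) (hK : IsCompact K) (hKG : OmegaConvex G K)
    (hK2 : IsCompact K2) (hKK2 : K ⊆ interior K2) (hK2K1 : K2 ⊆ interior K1) (hK1G : K1 ⊆ G)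
    (hL : IsCompact L) (hLΩ : L ⊆ Ω) (hLc : OmegaConvex Ω L)
    (hU : IsOpen U) (hK1U : K1 ⊆ U) (hψ : DifferentiableOn ℂ ψ U) (hinj : InjOn ψ U)
    (hmaps : MapsTo ψ K1 Ω)
    (hF : DifferentiableOn ℂ F Ω)
    (hdisj : ∀ z ∈ K1, ψ z ∉ L)
    (hB : ∀ w ∈ ψ '' K ∪ L, ‖F w‖ ≤ B)
    (hsep : ∀ z ∈ frontier K2, ∃ c ∈ connectedComponentIn (interior K1 \ K) z, B < ‖F (ψ c)‖) :
    OmegaConvex Ω (ψ '' K ∪ L) := by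
  have hKK1 : K ⊆ K1 := hKK2.trans (interior_subset.trans (hK2K1.trans interior_subset))
  have hψc : ContinuousOn ψ U := hψ.continuousOn
  have hcomp : IsCompact (ψ '' K ∪ L) :=
    (hK.image_of_continuousOn (hψc.mono (hKK1.trans hK1U))).union hL
  have hsubΩ : ψ '' K ∪ L ⊆ Ω := by
    apply union_subset _ hLΩ
    rintro _ ⟨z, hz, rfl⟩
    exact hmaps (hKK1 hz)
  rintro C ⟨⟨p, hp, rfl⟩, hb⟩
  set C := connectedComponentIn (ψ '' K ∪ L)ᶜ p with hC
  by_contra hcon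
  have hCΩ : C ⊆ Ω := by
    intro x hx
    by_contra hx'
    exact hcon ⟨x, hx, hx'⟩
  have hfr : frontier C ⊆ ψ '' K ∪ L := by
    have := frontier_comp hcomp.isClosed.isOpen_compl p
    rwa [compl_compl] at this
  have hCsub : C ⊆ (ψ '' K ∪ L)ᶜ := connectedComponentIn_subset _ _
  have hCo : IsOpen C := hcomp.isClosed.isOpen_compl.connectedComponentIn
  have hpC : p ∈ C := mem_connectedComponentIn hp
  by_cases hcase : ∃ z0 ∈ K, ψ z0 ∈ frontier C
  · obtain ⟨z0, hz0, hz0C⟩ := hcase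
    have hz0U : z0 ∈ U := hK1U (hKK1 hz0)
    obtain ⟨z, hzK2, hzC⟩ : ∃ z ∈ interior K2, ψ z ∈ C := by
      have h1 : ψ '' interior K2 ∈ nhds (ψ z0) := by
        apply inj_nhds_le hU hψ hinj hz0U
        exact Filter.image_mem_map (isOpen_interior.mem_nhds (hKK2 hz0))
      obtain ⟨y, ⟨z, hz, rfl⟩, hy2⟩ :=
        mem_closure_iff_nhds.mp (frontier_subset_closure hz0C) _ h1
      exact ⟨z, hz, hy2⟩
    have hzK : z ∉ K := fun h => hCsub hzC (Or.inl ⟨z, h, rfl⟩)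
    set W := interior K1 \ K with hW
    have hWo : IsOpen W := isOpen_interior.sdiff hK.isClosed
    have hzW : z ∈ W := ⟨hK2K1 (interior_subset hzK2), hzK⟩
    set V := connectedComponentIn W z with hV
    have hVW : V ⊆ W := connectedComponentIn_subset _ _
    have hzV : z ∈ V := mem_connectedComponentIn hzW
    have hWU : W ⊆ U := fun x hx => hK1U (interior_subset hx.1)
    have hVC : ψ '' V ⊆ C := by
      have h1 : IsPreconnected (ψ '' V) :=
        isPreconnected_connectedComponentIn.image _ (hψc.mono (hVW.trans hWU))
      have h2 : ψ '' V ⊆ (ψ '' K ∪ L)ᶜ := by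
        rintro _ ⟨x, hx, rfl⟩ (⟨y, hy, hyx⟩ | hxL)
        · have := hinj (hK1U (hKK1 hy)) (hWU (hVW hx)) hyx
          exact (hVW hx).2 (this ▸ hy)
        · exact hdisj x (interior_subset (hVW hx).1) hxL
      have h3 := h1.subset_connectedComponentIn ⟨z, hzV, rfl⟩ h2
      rwa [← connectedComponentIn_eq hzC] at h3
    by_cases hmeet : ∃ y ∈ V, y ∈ frontier K2
    · obtain ⟨y, hyV, hy⟩ := hmeet
      obtain ⟨c, hc, hcB⟩ := hsep y hy
      rw [← connectedComponentIn_eq hyV] at hc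
      have := max_princ hb hCΩ (hfr.trans hsubΩ) hF (fun w hw => hB w (hfr hw))
        (hVC ⟨c, hc, rfl⟩)
      linarith
    · have hV2 : V ⊆ interior K2 := by
        apply pre_frontier isPreconnected_connectedComponentIn ⟨z, hzV, interior_subset hzK2⟩
        rw [Set.disjoint_left]
        intro y hy hy'
        exact hmeet ⟨y, hy, hy'⟩
      have hVb : IsBounded V := hK2.isBounded.subset (hV2.trans interior_subset)
      have hVf : frontier V ⊆ K := by
        intro x hx
        have h1 : x ∈ K2 := closure_minimal (hV2.trans interior_subset) hK2.isClosed
          (frontier_subset_closure hx)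
        by_contra hxK
        exact frontier_comp hWo z hx ⟨hK2K1 h1, hxK⟩
      have hVK : Disjoint V K := Set.disjoint_left.mpr (fun x hx => (hVW hx).2)
      have heq := hole_of_frontier isPreconnected_connectedComponentIn hWo.connectedComponentIn
        hVK hVf hzV
      obtain ⟨x, hx, hxG⟩ := hKG V ⟨⟨z, hzK, heq.symm⟩, hVb⟩
      exact hxG (hK1G (interior_subset (hVW hx).1))
  · have hfL : frontier C ⊆ L := by
      intro x hx
      rcases hfr hx with ⟨z, hz, rfl⟩ | h
      · exact absurd ⟨z, hz, hx⟩ hcase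
      · exact h
    have hCL : Disjoint C L := Set.disjoint_left.mpr (fun x hx h => hCsub hx (Or.inr h))
    have heq := hole_of_frontier isPreconnected_connectedComponentIn hCo hCL hfL hpC
    exact hcon (hLc C ⟨⟨p, fun h => hp (Or.inr h), heq.symm⟩, hb⟩)


theorem nec_poly (G K K1 K2 : Set ℂ) (hG : IsOpen G) (hK : IsCompact K) (hKG : K ⊆ G)
    (hKc : OmegaConvex G K) (hK2 : IsCompact K2) (hKK2 : K ⊆ interior K2)
    (hK2K1 : K2 ⊆ interior K1) :
    ∃ q : ℂ → ℂ, DifferentiableOn ℂ q G ∧ (∀ z ∈ K, ‖q z‖ < 1/4) ∧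
      ∀ z ∈ frontier K2, ∃ c ∈ connectedComponentIn (interior K1 \ K) z, q c = 2 := by
  have hWo : IsOpen (interior K1 \ K) := isOpen_interior.sdiff hK.isClosed
  have hfr : frontier K2 ⊆ interior K1 \ K := by
    intro z hz
    refine ⟨hK2K1 (hK2.isClosed.frontier_subset hz), fun hzK => hz.2 (hKK2 hzK)⟩
  have hfc : IsCompact (frontier K2) :=
    hK2.of_isClosed_subset isClosed_frontier hK2.isClosed.frontier_subset
  obtain ⟨t, ht1, ht2⟩ := hfc.elim_nhds_subcover
    (fun x => connectedComponentIn (interior K1 \ K) x)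
    (fun x hx => hWo.connectedComponentIn.mem_nhds (mem_connectedComponentIn (hfr hx)))
  let P : ℂ → ℂ := fun z => ∏ c ∈ t, (z - c)
  have hPd : Differentiable ℂ P := by
    intro z
    have : DifferentiableAt ℂ (fun z => ∏ c ∈ t, (z - c)) z := by fun_prop
    exact this
  have hPK : ∀ z ∈ K, P z ≠ 0 := by
    intro z hz
    apply Finset.prod_ne_zero_iff.mpr
    intro c hc h0
    rw [sub_eq_zero] at h0
    subst h0
    exact (hfr (ht1 _ hc)).2 hz
  obtain ⟨D, hD⟩ := hK.exists_bound_of_continuousOn hPd.continuous.continuousOn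
  have hDp : 0 < |D| + 1 := by positivity
  have hUo : IsOpen {z | P z ≠ 0} := isOpen_ne_fun hPd.continuous continuous_const
  obtain ⟨H, hH, hHK⟩ := runge G K {z | P z ≠ 0} hG hK hKG hKc hUo hPK (fun z => 2 / P z)
    (fun z hz => (DifferentiableAt.div (differentiableAt_const _) (hPd z) hz).differentiableWithinAt)
    (1 / (4 * (|D| + 1))) (by positivity)
  refine ⟨fun z => 2 - P z * H z, ?_, ?_, ?_⟩
  · exact (differentiableOn_const _).sub (hPd.differentiableOn.mul hH)
  · intro z hz
    have h1 := hHK z hz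
    have h2 := hD z hz
    have h3 : 2 - P z * H z = - (P z * (H z - 2 / P z)) := by
      have := hPK z hz
      field_simp
      ring
    beta_reduce
    rw [h3, norm_neg, norm_mul]
    calc ‖P z‖ * ‖H z - 2 / P z‖ ≤ |D| * (1 / (4 * (|D| + 1))) := by
          gcongr
          exact h2.trans (le_abs_self D)
      _ < 1 / 4 := by
          rw [mul_one_div, div_lt_div_iff₀ (by positivity) (by norm_num)]
          linarith
  · intro z hz
    obtain ⟨x, hx, hzx⟩ := Set.mem_iUnion₂.mp (ht2 hz)
    refine ⟨x, ?_, ?_⟩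
    · rw [← connectedComponentIn_eq hzx]
      exact mem_connectedComponentIn (hfr (ht1 x hx))
    · have : P x = 0 := Finset.prod_eq_zero hx (sub_self x)
      simp [this]

theorem necessity (G Ω : Set ℂ) (hG : IsOpen G) (hGne : G.Nonempty) (hΩ : IsOpen Ω)
    (φ : ℕ → ℂ → ℂ) (hφd : ∀ n, DifferentiableOn ℂ (φ n) G)
    (hφm : ∀ n, Set.MapsTo (φ n) G Ω) (hinj : EventuallyInjective G φ)
    (f : ℂ → ℂ) (hf : DifferentiableOn ℂ f Ω) (hu : UniversalFor G φ f)
    (K : Set ℂ) (hKG : K ⊆ G) (hK : IsCompact K) (hKc : OmegaConvex G K)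
    (L : Set ℂ) (hLΩ : L ⊆ Ω) (hL : IsCompact L) (hLc : OmegaConvex Ω L) (N : ℕ) :
    ∃ n ≥ N, (φ n '' K) ∩ L = ∅ ∧ OmegaConvex Ω ((φ n '' K) ∪ L) := by
  obtain ⟨p, hp⟩ := hGne
  obtain ⟨K2, hK2, hKK2, hK2G⟩ := exists_compact_between (hK.union (isCompact_singleton (x := p))) hG
    (Set.union_subset hKG (by simpa using hp))
  obtain ⟨K1, hK1, hK2K1, hK1G⟩ := exists_compact_between hK2 hG hK2G
  have hpK1 : p ∈ K1 := interior_subset (hK2K1 (interior_subset (hKK2 (by simp))))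
  have hKK2' : K ⊆ interior K2 := subset_union_left.trans hKK2
  have hKK1 : K ⊆ K1 := fun z hz => interior_subset (hK2K1 (interior_subset (hKK2' hz)))
  obtain ⟨q, hq, hqK, hqc⟩ := nec_poly G K K1 K2 hG hK hKG hKc hK2 hKK2' hK2K1
  obtain ⟨Q, hQ⟩ := hK1.exists_bound_of_continuousOn (hq.continuousOn.mono hK1G)
  obtain ⟨M0, hM0⟩ := hL.exists_bound_of_continuousOn (hf.continuousOn.mono hLΩ)
  obtain ⟨M, hM1, hM⟩ : ∃ M : ℝ, 1 ≤ M ∧ ∀ z ∈ L, ‖f z‖ ≤ M :=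
    ⟨max 1 M0, le_max_left _ _, fun z hz => (hM0 z hz).trans (le_max_right _ _)⟩
  have hQ0 : 0 ≤ Q := (norm_nonneg _).trans (hQ p hpK1)
  let A : ℕ → ℝ := fun k => 100 * M ^ 2 + 100 + Q + M + 1 + k
  have hex : ∀ k : ℕ, ∃ n : ℕ, ∀ z ∈ K1, ‖f (φ n z) - ((A k : ℂ) + q z)‖ < 1 / 4 := fun k =>
    hu (fun z => (A k : ℂ) + q z) ((differentiableOn_const _).add hq) K1 hK1G hK1 (1/4) (by norm_num)
  choose n hn using hex
  have hninj : Function.Injective n := by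
    intro j k hjk
    have h1 := hn j p hpK1
    have h2 := hn k p hpK1
    rw [hjk] at h1
    have h3 : ‖((A j - A k : ℝ) : ℂ)‖ < 1 / 2 := by
      have : ((A j - A k : ℝ) : ℂ) = (f (φ (n k) p) - ((A k : ℂ) + q p))
        - (f (φ (n k) p) - ((A j : ℂ) + q p)) := by push_cast; ring
      rw [this]
      refine (norm_sub_le _ _).trans_lt (by linarith)
    rw [Complex.norm_real, Real.norm_eq_abs] at h3
    have h4 : A j - A k = ((j : ℤ) - (k : ℤ) : ℤ) := by simp [A]
    rw [h4, ← Int.cast_abs] at h3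
    have h5 : |(j : ℤ) - k| < 1 := by
      have : ((|(j : ℤ) - k| : ℤ) : ℝ) < ((1 : ℤ) : ℝ) := by push_cast at h3 ⊢; linarith
      exact_mod_cast this
    have := Int.abs_lt_one_iff.mp h5
    omega
  obtain ⟨N1, hN1⟩ := hinj K1 hK1G hK1
  obtain ⟨k, hk⟩ := ((hninj.nat_tendsto_atTop).eventually_ge_atTop (max N N1)).exists
  obtain ⟨U, hU, hK1U, hUG, hUinj⟩ := hN1 (n k) ((le_max_right _ _).trans hk)
  have hA : 100 * M ^ 2 + 100 + Q + M + 1 ≤ A k := by simp [A]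
  have hnk := hn k
  generalize A k = a at hA hnk
  have ha0 : 0 < a := by nlinarith
  have hna : ‖(a : ℂ)‖ = a := by
    rw [Complex.norm_real, Real.norm_eq_abs, abs_of_pos ha0]
  have hdisj : ∀ z ∈ K1, φ (n k) z ∉ L := by
    intro z hz hzL
    have h1 := hnk z hz
    have h2 := hQ z hz
    have h3 := hM _ hzL
    have h4 : (a : ℂ) = f (φ (n k) z) - q z - (f (φ (n k) z) - ((a : ℂ) + q z)) := by ring
    have h5 : ‖(a : ℂ)‖ ≤ ‖f (φ (n k) z)‖ + ‖q z‖ + ‖f (φ (n k) z) - ((a : ℂ) + q z)‖ := by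
      conv_lhs => rw [h4]
      exact (norm_sub_le _ _).trans (by gcongr; exact norm_sub_le _ _)
    rw [hna] at h5
    nlinarith
  refine ⟨n k, (le_max_left _ _).trans hk, ?_, ?_⟩
  · rw [← Set.disjoint_iff_inter_eq_empty, Set.disjoint_left]
    rintro _ ⟨z, hz, rfl⟩
    exact hdisj z (hKK1 hz)
  · refine nec_core G Ω K K1 K2 L U (φ (n k)) (fun w => f w ^ 2 * (f w - a)) ((a + 1/2)^2 / 2)
      hΩ hK hKc hK2 hKK2' hK2K1 hK1G hL hLΩ hLc hU hK1U ((hφd _).mono hUG) hUinj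
      (fun z hz => hφm _ (hK1G hz)) ((hf.pow 2).mul (hf.sub (differentiableOn_const _))) hdisj ?_ ?_
    · rintro w (⟨z, hz, rfl⟩ | hw)
      · have h1 := hnk z (hKK1 hz)
        have h2 := hqK z hz
        have h3 : ‖f (φ (n k) z) - a‖ ≤ 1 / 2 := by
          have : f (φ (n k) z) - a = (f (φ (n k) z) - ((a : ℂ) + q z)) + q z := by ring
          rw [this]
          exact (norm_add_le _ _).trans (by linarith)
        have h4 : ‖f (φ (n k) z)‖ ≤ a + 1 / 2 := by
          have : f (φ (n k) z) = a + (f (φ (n k) z) - a) := by ring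
          rw [this]
          exact (norm_add_le _ _).trans (by rw [hna]; linarith)
        simp only [norm_mul, norm_pow]
        calc _ ≤ (a + 1/2)^2 * (1/2) := by gcongr
          _ = _ := by ring
      · have h3 := hM w hw
        simp only [norm_mul, norm_pow]
        have h4 : ‖f w - a‖ ≤ M + a := (norm_sub_le _ _).trans (by rw [hna]; linarith)
        calc _ ≤ M ^ 2 * (M + a) := by gcongr
          _ ≤ (a / 100) * (a + a) := by gcongr <;> nlinarith
          _ ≤ _ := by nlinarith
    · intro z hz
      obtain ⟨c, hc, hc2⟩ := hqc z hz
      refine ⟨c, hc, ?_⟩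
      have hcK1 : c ∈ K1 := interior_subset (connectedComponentIn_subset _ _ hc).1
      have h1 := hnk c hcK1
      rw [hc2] at h1
      have h3 : 7 / 4 ≤ ‖f (φ (n k) c) - a‖ := by
        have e : (2 : ℂ) = (f (φ (n k) c) - a) - (f (φ (n k) c) - ((a : ℂ) + 2)) := by ring
        have h5 : ‖(2 : ℂ)‖ ≤ ‖f (φ (n k) c) - a‖ + ‖f (φ (n k) c) - ((a : ℂ) + 2)‖ := by
          conv_lhs => rw [e]
          exact norm_sub_le _ _
        rw [Complex.norm_ofNat] at h5
        linarith
      have h4 : a ≤ ‖f (φ (n k) c)‖ := by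
        have e : ((a + 2 : ℝ) : ℂ) = f (φ (n k) c) - (f (φ (n k) c) - ((a : ℂ) + 2)) := by
          push_cast; ring
        have h5 : ‖((a + 2 : ℝ) : ℂ)‖ ≤ ‖f (φ (n k) c)‖ + ‖f (φ (n k) c) - ((a : ℂ) + 2)‖ := by
          conv_lhs => rw [e]
          exact norm_sub_le _ _
        rw [Complex.norm_real, Real.norm_eq_abs, abs_of_pos (by linarith)] at h5
        linarith
      simp only [norm_mul, norm_pow]
      calc (a + 1/2)^2/2 < a ^ 2 * (7 / 4) := by nlinarith
        _ ≤ _ := by gcongr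


/-- Standard exhaustion of an open set by compact sets. -/
def exh (Ω : Set ℂ) (j : ℕ) : Set ℂ :=
  closedBall 0 (j : ℝ) ∩ {z | ∀ w ∈ Ωᶜ, 1 / ((j : ℝ) + 1) ≤ ‖z - w‖}

theorem exh_subset (Ω : Set ℂ) (j : ℕ) : exh Ω j ⊆ Ω := by
  intro z hz
  by_contra hcon
  have := hz.2 z hcon
  simp only [sub_self, norm_zero] at this
  have h2 : (0 : ℝ) < 1 / ((j : ℝ) + 1) := by positivity
  linarith

theorem exh_compact (Ω : Set ℂ) (j : ℕ) : IsCompact (exh Ω j) := by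
  apply (isCompact_closedBall _ _).inter_right
  have : {z : ℂ | ∀ w ∈ Ωᶜ, 1 / ((j : ℝ) + 1) ≤ ‖z - w‖}
      = ⋂ w ∈ Ωᶜ, {z : ℂ | 1 / ((j : ℝ) + 1) ≤ ‖z - w‖} := by
    ext z; simp
  rw [this]
  apply isClosed_biInter
  intro w _
  exact isClosed_le continuous_const (by fun_prop)

theorem exh_convex (Ω : Set ℂ) (j : ℕ) : OmegaConvex Ω (exh Ω j) := by
  rintro C ⟨⟨z, hz, rfl⟩, hb⟩
  by_contra hcon
  have hC : connectedComponentIn (exh Ω j)ᶜ z ⊆ Ω := by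
    intro x hx
    by_contra hxO
    exact hcon ⟨x, hx, hxO⟩
  have hf : frontier (connectedComponentIn (exh Ω j)ᶜ z) ⊆ exh Ω j := by
    have := frontier_comp (exh_compact Ω j).isClosed.isOpen_compl z
    rwa [compl_compl] at this
  have hzC := mem_connectedComponentIn hz
  apply hz
  refine ⟨?_, fun w hw => ?_⟩
  · rw [mem_closedBall_zero_iff]
    exact max_princ (F := id) hb hC (hf.trans (exh_subset _ _)) differentiableOn_id
      (fun x hx => mem_closedBall_zero_iff.mp (hf hx).1) hzC
  · have hne : ∀ x ∈ Ω, x - w ≠ 0 := fun x hx h0 => hw (by rwa [← sub_eq_zero.mp h0])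
    have hj : (0 : ℝ) < (j : ℝ) + 1 := by positivity
    have h := max_princ (F := fun x => (x - w)⁻¹) (M := (j : ℝ) + 1) hb hC
      (hf.trans (exh_subset _ _))
      (fun x hx => ((differentiableAt_id.sub_const w).inv (hne x hx)).differentiableWithinAt)
      (fun x hx => by
        have h1 := (hf hx).2 w hw
        rw [norm_inv]
        rw [one_div] at h1
        exact inv_le_of_inv_le₀ hj h1) hzC
    rw [norm_inv] at h
    rw [one_div]
    exact inv_le_of_inv_le₀ (norm_pos_iff.mpr (hne z (hC hzC))) h

theorem exh_absorb (Ω : Set ℂ) (hΩ : IsOpen Ω) (K : Set ℂ) (hK : IsCompact K) (hKΩ : K ⊆ Ω) :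
    ∃ i : ℕ, ∀ j ≥ i, K ⊆ exh Ω j := by
  obtain ⟨R, hR⟩ := hK.isBounded.subset_closedBall 0
  obtain ⟨δ, hδ, hδK⟩ := hK.exists_thickening_subset_open hΩ hKΩ
  obtain ⟨i1, hi1⟩ := exists_nat_ge R
  obtain ⟨i2, hi2⟩ := exists_nat_one_div_lt hδ
  refine ⟨max i1 i2, fun j hj z hz => ⟨?_, fun w hw => ?_⟩⟩
  · refine closedBall_subset_closedBall ?_ (hR hz)
    exact hi1.trans (by exact_mod_cast (le_max_left _ _).trans hj)
  · have h1 : δ ≤ ‖z - w‖ := by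
      by_contra! hcon
      apply hw
      apply hδK
      rw [mem_thickening_iff]
      exact ⟨z, hz, by rwa [dist_comm, dist_eq_norm]⟩
    refine le_trans ?_ (hi2.le.trans h1)
    have : (i2 : ℝ) ≤ j := by exact_mod_cast (le_max_right _ _).trans hj
    gcongr

theorem inv_diff {U : Set ℂ} (hU : IsOpen U) {ψ : ℂ → ℂ} (hψ : DifferentiableOn ℂ ψ U)
    (hinj : InjOn ψ U) :
    IsOpen (ψ '' U) ∧ DifferentiableOn ℂ (Function.invFunOn ψ U) (ψ '' U) := by
  have ho : IsOpen (ψ '' U) := by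
    rw [isOpen_iff_mem_nhds]
    rintro _ ⟨z, hz, rfl⟩
    exact inj_nhds_le hU hψ hinj hz (image_mem_map (hU.mem_nhds hz))
  refine ⟨ho, ?_⟩
  have hl : ∀ z ∈ U, Function.invFunOn ψ U (ψ z) = z := fun z hz =>
    hinj.leftInvOn_invFunOn hz
  have hr : ∀ w ∈ ψ '' U, ψ (Function.invFunOn ψ U w) = w := by
    rintro _ ⟨z, hz, rfl⟩
    rw [hl z hz]
  generalize Function.invFunOn ψ U = g at hl hr
  have hc : ∀ z ∈ U, Tendsto g (nhds (ψ z)) (nhds z) := by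
    intro z hz V hV
    have h1 := inj_nhds_le hU hψ hinj hz (image_mem_map (inter_mem hV (hU.mem_nhds hz)))
    rw [mem_map]
    filter_upwards [h1]
    rintro _ ⟨x, hx, rfl⟩
    rw [mem_preimage, hl x hx.2]
    exact hx.1
  rintro _ ⟨z, hz, rfl⟩
  apply DifferentiableAt.differentiableWithinAt
  apply AnalyticAt.differentiableAt
  have hca : ContinuousAt g (ψ z) := by
    rw [ContinuousAt, hl z hz]
    exact hc z hz
  apply Complex.analyticAt_of_differentiable_on_punctured_nhds_of_continuousAt _ hca
  have hda : AnalyticAt ℂ (deriv ψ) z := (hψ.analyticAt (hU.mem_nhds hz)).deriv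
  have hne : ∀ᶠ x in nhdsWithin z {z}ᶜ, deriv ψ x ≠ 0 := by
    refine hda.eventually_eq_zero_or_eventually_ne_zero.resolve_left ?_
    intro h0
    obtain ⟨r, hr0, hrb⟩ := Metric.mem_nhds_iff.mp (inter_mem h0 (hU.mem_nhds hz))
    obtain ⟨y, hy, hyz⟩ : ∃ y ∈ ball z r, y ≠ z := by
      refine ⟨z + (r / 2 : ℝ), ?_, ?_⟩
      · rw [mem_ball, dist_eq_norm, add_sub_cancel_left, Complex.norm_real, Real.norm_eq_abs,
          abs_of_pos (by positivity)]
        linarith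
      · intro h
        have h2 : ((r / 2 : ℝ) : ℂ) = 0 := by simpa using h
        have h3 := Complex.ofReal_eq_zero.mp h2
        linarith
    have := isOpen_ball.is_const_of_deriv_eq_zero (convex_ball z r).isPreconnected
      (hψ.mono fun x hx => (hrb hx).2) (fun x hx => (hrb hx).1) hy (mem_ball_self hr0)
    exact hyz (hinj (hrb hy).2 hz this)
  have ht : Tendsto g (nhdsWithin (ψ z) {ψ z}ᶜ) (nhdsWithin z {z}ᶜ) := by
    apply tendsto_nhdsWithin_of_tendsto_nhds_of_eventually_within
    · exact (hc z hz).mono_left nhdsWithin_le_nhds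
    · filter_upwards [self_mem_nhdsWithin,
        mem_nhdsWithin_of_mem_nhds (ho.mem_nhds (mem_image_of_mem ψ hz))] with w hw hwU hgz
      apply hw
      rw [mem_singleton_iff] at hgz ⊢
      rw [← hr w hwU, hgz]
  filter_upwards [ht.eventually hne,
    mem_nhdsWithin_of_mem_nhds (ho.mem_nhds (mem_image_of_mem ψ hz))] with w hw hwU
  obtain ⟨x, hx, rfl⟩ := hwU
  have hcx : ContinuousAt g (ψ x) := by
    rw [ContinuousAt, hl x hx]
    exact hc x hx
  refine (HasDerivAt.of_local_left_inverse hcx (f := ψ) (f' := deriv ψ (g (ψ x))) ?_ hw ?_).differentiableAt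
  · rw [hl x hx]
    exact (hψ.differentiableAt (hU.mem_nhds hx)).hasDerivAt
  · filter_upwards [ho.mem_nhds (mem_image_of_mem ψ hx)] with y hy
    exact hr y hy

theorem suff_step (G Ω : Set ℂ) (hΩ : IsOpen Ω)
    (φ : ℕ → ℂ → ℂ) (hφd : ∀ n, DifferentiableOn ℂ (φ n) G)
    (hφm : ∀ n, Set.MapsTo (φ n) G Ω) (hinj : EventuallyInjective G φ)
    (hcond : ∀ K : Set ℂ, K ⊆ G → IsCompact K → OmegaConvex G K →
        ∀ L : Set ℂ, L ⊆ Ω → IsCompact L → OmegaConvex Ω L →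
          ∀ N : ℕ, ∃ n ≥ N, (φ n '' K) ∩ L = ∅ ∧ OmegaConvex Ω ((φ n '' K) ∪ L))
    (K : Set ℂ) (hKG : K ⊆ G) (hK : IsCompact K) (hKc : OmegaConvex G K)
    (L : Set ℂ) (hLΩ : L ⊆ Ω) (hL : IsCompact L) (hLc : OmegaConvex Ω L)
    (F g : ℂ → ℂ) (hF : DifferentiableOn ℂ F Ω) (hg : DifferentiableOn ℂ g G)
    (ε : ℝ) (hε : 0 < ε) :
    ∃ (n : ℕ) (F' : ℂ → ℂ), DifferentiableOn ℂ F' Ω ∧ (∀ z ∈ L, ‖F' z - F z‖ < ε) ∧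
      ∀ z ∈ K, ‖F' (φ n z) - g z‖ < ε := by
  obtain ⟨N, hN⟩ := hinj K hKG hK
  obtain ⟨n, hn, hdisj, hconv⟩ := hcond K hKG hK hKc L hLΩ hL hLc N
  obtain ⟨U, hU, hKU, hUG, hUinj⟩ := hN n hn
  obtain ⟨ho, hd⟩ := inv_diff hU ((hφd n).mono hUG) hUinj
  have hKim : IsCompact (φ n '' K) := hK.image_of_continuousOn ((hφd n).continuousOn.mono hKG)
  obtain ⟨O1, O2, hO1, hO2, hKO, hLO, hO⟩ := SeparatedNhds.of_isCompact_isCompact hKim hL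
    (Set.disjoint_iff_inter_eq_empty.mpr hdisj)
  classical
  let h : ℂ → ℂ := fun w => if w ∈ O1 then g (Function.invFunOn (φ n) U w) else F w
  have hh : DifferentiableOn ℂ h (((φ n '' U) ∩ O1) ∪ (O2 ∩ Ω)) := by
    rintro w (hw | hw)
    · apply DifferentiableAt.differentiableWithinAt
      have h1 : DifferentiableAt ℂ (fun w => g (Function.invFunOn (φ n) U w)) w := by
        have hwU : Function.invFunOn (φ n) U w ∈ U := Function.invFunOn_mem hw.1
        exact ((hg.mono hUG).differentiableAt (hU.mem_nhds hwU)).comp w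
          (hd.differentiableAt (ho.mem_nhds hw.1))
      refine h1.congr_of_eventuallyEq ?_
      filter_upwards [hO1.mem_nhds hw.2] with x hx
      simp only [h, if_pos hx]
    · apply DifferentiableAt.differentiableWithinAt
      refine (hF.differentiableAt (hΩ.mem_nhds hw.2)).congr_of_eventuallyEq ?_
      filter_upwards [hO2.mem_nhds hw.1] with x hx
      simp only [h, if_neg (Set.disjoint_right.mp hO hx)]
  obtain ⟨F', hF', hF'K⟩ := runge Ω (φ n '' K ∪ L) _ hΩ (hKim.union hL)
    (Set.union_subset (by rintro _ ⟨z, hz, rfl⟩; exact hφm n (hKG hz)) hLΩ) hconv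
    ((ho.inter hO1).union (hO2.inter hΩ))
    (Set.union_subset_union (Set.subset_inter (Set.image_mono hKU) hKO)
      (Set.subset_inter hLO hLΩ)) h hh ε hε
  refine ⟨n, F', hF', fun z hz => ?_, fun z hz => ?_⟩
  · have := hF'K z (Or.inr hz)
    simpa only [h, if_neg (Set.disjoint_right.mp hO (hLO hz))] using this
  · have := hF'K (φ n z) (Or.inl (mem_image_of_mem _ hz))
    simp only [h, if_pos (hKO (mem_image_of_mem _ hz))] at this
    rwa [hUinj.leftInvOn_invFunOn (hKU hz)] at this

theorem hol_separable (G : Set ℂ) (hG : IsOpen G) :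
    ∃ d : ℕ → ℂ → ℂ, (∀ m, DifferentiableOn ℂ (d m) G) ∧
      ∀ g : ℂ → ℂ, DifferentiableOn ℂ g G → ∀ K : Set ℂ, K ⊆ G → IsCompact K →
        ∀ ε : ℝ, 0 < ε → ∃ m, ∀ z ∈ K, ‖d m z - g z‖ < ε := by
  have : LocallyCompactSpace G := hG.locallyCompactSpace
  let S : Set C(G, ℂ) := {u | ∃ g : ℂ → ℂ, DifferentiableOn ℂ g G ∧ ∀ z : G, u z = g z}
  have hS0 : (0 : C(G, ℂ)) ∈ S := ⟨fun _ => 0, differentiableOn_const _, fun _ => rfl⟩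
  have : Nonempty S := ⟨⟨0, hS0⟩⟩
  obtain ⟨u, hu⟩ := TopologicalSpace.exists_dense_seq S
  choose d hd hdu using fun m => (u m).2
  refine ⟨d, hd, fun g hg K hKG hK ε hε => ?_⟩
  let g0 : C(G, ℂ) := ⟨fun z => g z, continuousOn_iff_continuous_domRestrict.mp hg.continuousOn⟩
  let g1 : S := ⟨g0, g, hg, fun _ => rfl⟩
  have hK' : IsCompact ((↑) ⁻¹' K : Set G) := by
    rw [Subtype.isCompact_iff, Subtype.image_preimage_coe, Set.inter_eq_right.mpr hKG]
    exact hK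
  have ht : Tendsto (fun v : S => (v : C(G, ℂ))) (nhds g1) (nhds g0) :=
    continuous_subtype_val.tendsto g1
  have h1 := Metric.tendstoUniformlyOn_iff.mp
    (ContinuousMap.tendsto_iff_forall_isCompact_tendstoUniformlyOn.mp ht _ hK') ε hε
  obtain ⟨m, hm⟩ := hu.exists_mem_open isOpen_interior ⟨g1, mem_interior_iff_mem_nhds.mpr h1⟩
  refine ⟨m, fun z hz => ?_⟩
  have h2 := interior_subset hm ⟨z, hKG hz⟩ hz
  rw [dist_comm, dist_eq_norm, hdu m ⟨z, hKG hz⟩] at h2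
  exact h2

theorem sufficiency (G Ω : Set ℂ) (hG : IsOpen G) (hΩ : IsOpen Ω)
    (φ : ℕ → ℂ → ℂ) (hφd : ∀ n, DifferentiableOn ℂ (φ n) G)
    (hφm : ∀ n, Set.MapsTo (φ n) G Ω) (hinj : EventuallyInjective G φ)
    (hcond : ∀ K : Set ℂ, K ⊆ G → IsCompact K → OmegaConvex G K →
        ∀ L : Set ℂ, L ⊆ Ω → IsCompact L → OmegaConvex Ω L →
          ∀ N : ℕ, ∃ n ≥ N, (φ n '' K) ∩ L = ∅ ∧ OmegaConvex Ω ((φ n '' K) ∪ L)) :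
    ∃ f : ℂ → ℂ, DifferentiableOn ℂ f Ω ∧ UniversalFor G φ f := by
  obtain ⟨d, hd, hdd⟩ := hol_separable G hG
  let S := {p : (ℂ → ℂ) × Set ℂ // DifferentiableOn ℂ p.1 Ω ∧ IsCompact p.2 ∧ p.2 ⊆ Ω ∧
    OmegaConvex Ω p.2}
  have hstep : ∀ (j : ℕ) (s : S), ∃ (s' : S) (n : ℕ),
      (∀ z ∈ s.1.2, ‖s'.1.1 z - s.1.1 z‖ < (1/2) ^ (j+1)) ∧
      (∀ z ∈ exh G j, ‖s'.1.1 (φ n z) - d (Nat.unpair j).1 z‖ < (1/2) ^ (j+1)) ∧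
      s.1.2 ⊆ s'.1.2 ∧ φ n '' exh G j ⊆ s'.1.2 ∧ exh Ω j ⊆ s'.1.2 := by
    rintro j ⟨⟨F, M⟩, hF, hMc, hMΩ, hMconv⟩
    obtain ⟨n, F', hF', h1, h2⟩ := suff_step G Ω hΩ φ hφd hφm hinj hcond (exh G j)
      (exh_subset G j) (exh_compact G j) (exh_convex G j) M hMΩ hMc hMconv F
      (d (Nat.unpair j).1) hF (hd _) ((1/2) ^ (j+1)) (by positivity)
    have hc : IsCompact (M ∪ φ n '' exh G j ∪ exh Ω j) :=
      (hMc.union ((exh_compact G j).image_of_continuousOn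
        ((hφd n).continuousOn.mono (exh_subset G j)))).union (exh_compact Ω j)
    have hs : M ∪ φ n '' exh G j ∪ exh Ω j ⊆ Ω := by
      refine Set.union_subset (Set.union_subset hMΩ ?_) (exh_subset Ω j)
      rintro _ ⟨z, hz, rfl⟩
      exact hφm n (exh_subset G j hz)
    obtain ⟨i, hi⟩ := exh_absorb Ω hΩ _ hc hs
    have hi' := hi i le_rfl
    refine ⟨⟨⟨F', exh Ω i⟩, hF', exh_compact Ω i, exh_subset Ω i, exh_convex Ω i⟩, n, h1, h2,
      ?_, ?_, ?_⟩
    · exact (subset_union_left.trans subset_union_left).trans hi'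
    · exact (subset_union_right.trans subset_union_left).trans hi'
    · exact subset_union_right.trans hi'
  choose nxt nn hn1 hn2 hn3 hn4 hn5 using hstep
  let s0 : S := ⟨⟨fun _ => 0, exh Ω 0⟩, differentiableOn_const _, exh_compact Ω 0, exh_subset Ω 0,
    exh_convex Ω 0⟩
  let s : ℕ → S := fun j => Nat.rec s0 (fun j t => nxt j t) j
  have hs : ∀ j, s (j+1) = nxt j (s j) := fun j => rfl
  let F : ℕ → ℂ → ℂ := fun j => (s j).1.1
  let M : ℕ → Set ℂ := fun j => (s j).1.2
  have hF : ∀ j, DifferentiableOn ℂ (F j) Ω := fun j => (s j).2.1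
  have hMmono : Monotone M := monotone_nat_of_le_succ fun j => hn3 j (s j)
  have hstep : ∀ j, ∀ z ∈ M j, ‖F (j+1) z - F j z‖ ≤ (1/2) ^ (j+1) :=
    fun j z hz => (hn1 j (s j) z hz).le
  have happ : ∀ j, ∀ z ∈ exh G j,
      ‖F (j+1) (φ (nn j (s j)) z) - d (Nat.unpair j).1 z‖ < (1/2) ^ (j+1) :=
    fun j z hz => hn2 j (s j) z hz
  have hMφ : ∀ j, ∀ z ∈ exh G j, φ (nn j (s j)) z ∈ M (j+1) :=
    fun j z hz => hn4 j (s j) (mem_image_of_mem _ hz)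
  have hMexh : ∀ j, exh Ω j ⊆ M (j+1) := fun j => hn5 j (s j)
  clear_value F M
  have hdist : ∀ i, ∀ z ∈ M i, ∀ k, dist (F (i + k) z) (F (i + (k+1)) z)
      ≤ (1/2) ^ (i+1) * (1/2) ^ k := by
    intro i z hz k
    rw [dist_comm, dist_eq_norm]
    refine (hstep (i+k) z (hMmono (Nat.le_add_right i k) hz)).trans (le_of_eq ?_)
    rw [← pow_add]
    congr 1
    omega
  have hlim : ∀ z, ∃ a, ∀ i, z ∈ M i → Tendsto (fun j => F j z) atTop (nhds a) := by
    intro z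
    by_cases h : ∃ i, z ∈ M i
    · obtain ⟨i, hi⟩ := h
      obtain ⟨a, ha⟩ := cauchySeq_tendsto_of_complete
        (cauchySeq_of_le_geometric (1/2 : ℝ) _ (by norm_num) (hdist i z hi))
      refine ⟨a, fun _ _ => ?_⟩
      rw [← tendsto_add_atTop_iff_nat i]
      simpa only [add_comm] using ha
    · exact ⟨0, fun i hi => absurd ⟨i, hi⟩ h⟩
  choose f hf using hlim
  have hest : ∀ i, ∀ z ∈ M i, dist (F i z) (f z) ≤ (1/2) ^ i := by
    intro i z hz
    have h1 : Tendsto (fun k => F (i + k) z) atTop (nhds (f z)) := by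
      have := (tendsto_add_atTop_iff_nat i).mpr (hf z i hz)
      simpa only [add_comm] using this
    have h2 := dist_le_of_le_geometric_of_tendsto₀ (1/2 : ℝ) _ (by norm_num) (hdist i z hz) h1
    rw [add_zero] at h2
    refine h2.trans (le_of_eq ?_)
    rw [pow_succ]
    norm_num
  have hpow : Tendsto (fun j : ℕ => (1/2 : ℝ) ^ j) atTop (nhds 0) :=
    tendsto_pow_atTop_nhds_zero_of_lt_one (by norm_num) (by norm_num)
  refine ⟨f, ?_, ?_⟩
  · have hloc : TendstoLocallyUniformlyOn F f atTop Ω := by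
      rw [tendstoLocallyUniformlyOn_iff_forall_isCompact hΩ]
      intro K hKΩ hK
      obtain ⟨i, hi⟩ := exh_absorb Ω hΩ K hK hKΩ
      rw [Metric.tendstoUniformlyOn_iff]
      intro ε hε
      filter_upwards [hpow.eventually_lt_const hε, eventually_ge_atTop (i+1)] with j hj hij z hz
      rw [dist_comm]
      exact (hest j z (hMmono hij (hMexh i (hi i le_rfl hz)))).trans_lt hj
    exact hloc.differentiableOn (Eventually.of_forall hF) hΩ
  · intro g hg K hKG hK ε hε
    obtain ⟨m, hm⟩ := hdd g hg K hKG hK (ε/2) (by positivity)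
    obtain ⟨i, hi⟩ := exh_absorb G hG K hK hKG
    obtain ⟨k, hk1, hk2⟩ := ((hpow.eventually_lt_const (show (0:ℝ) < ε/2 by positivity)).and
      (eventually_ge_atTop i)).exists
    have hkj : k ≤ Nat.pair m k := Nat.right_le_pair m k
    refine ⟨nn (Nat.pair m k) (s (Nat.pair m k)), fun z hz => ?_⟩
    have hzE := hi _ (hk2.trans hkj) hz
    have h1 := happ _ z hzE
    have h2 := hest _ _ (hMφ _ z hzE)
    have h3 := hm z hz
    rw [Nat.unpair_pair] at h1
    rw [dist_comm, dist_eq_norm] at h2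
    have h4 : (1/2 : ℝ) ^ (Nat.pair m k + 1) + (1/2) ^ (Nat.pair m k + 1) ≤ (1/2) ^ k := by
      have : (1/2 : ℝ) ^ (Nat.pair m k) ≤ (1/2) ^ k :=
        pow_le_pow_of_le_one (by norm_num) (by norm_num) hkj
      rw [pow_succ]
      linarith
    generalize nn (Nat.pair m k) (s (Nat.pair m k)) = n at *
    have e : f (φ n z) - g z = (f (φ n z) - F (Nat.pair m k + 1) (φ n z))
      + (F (Nat.pair m k + 1) (φ n z) - d m z) + (d m z - g z) := by ring
    rw [e]
    refine (norm_add₃_le).trans_lt ?_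
    simp only at h1
    linarith

/-- Theorem `thm-charac-injective` (1). -/
theorem universal_iff_union_omegaConvex
    (G Ω : Set ℂ) (hG : IsOpen G) (hGconn : IsConnected G)
    (hΩ : IsOpen Ω) (hΩconn : IsConnected Ω)
    (φ : ℕ → ℂ → ℂ) (hφd : ∀ n, DifferentiableOn ℂ (φ n) G)
    (hφm : ∀ n, Set.MapsTo (φ n) G Ω)
    (hinj : EventuallyInjective G φ) :
    (∃ f : ℂ → ℂ, DifferentiableOn ℂ f Ω ∧ UniversalFor G φ f) ↔
      ∀ K : Set ℂ, K ⊆ G → IsCompact K → OmegaConvex G K →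
        ∀ L : Set ℂ, L ⊆ Ω → IsCompact L → OmegaConvex Ω L →
          ∀ N : ℕ, ∃ n ≥ N, (φ n '' K) ∩ L = ∅ ∧ OmegaConvex Ω ((φ n '' K) ∪ L) := by
  constructor
  · rintro ⟨f, hf, hu⟩ K hKG hK hKc L hLΩ hL hLc N
    exact necessity G Ω hG hGconn.nonempty hΩ φ hφd hφm hinj f hf hu K hKG hK hKc L hLΩ hL hLc N
  · intro hcond
    exact sufficiency G Ω hG hΩ φ hφd hφm hinj hcond
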